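/- Let w be the unique radial positive solution of Δw − w + w³ = 0 in ℝ², let h ∈ C²(ℝ²) be homogeneous of degree p ≥ 2 with H(y) = ∫h(x+y)w² having a unique critical point y₀, and let ψ₁ ∈ C²(ℝ²)∩L^∞(ℝ²) be the unique solution of ∇ψ₁(0) = 0 and (−Δ + 1 − 3w²)ψ₁ = −2w³/∫w⁴ − 2h(x+y₀)w/(p∫h(x+y₀)w²) in ℝ². Then ∫_{ℝ²} w³ψ₁ = (p+1)/p. -/

import Mathlib

noncomputable section
open MeasureTheory Filter Real Set
open scoped RealInnerProductSpace Topology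

abbrev R2 : Type := EuclideanSpace ℝ (Fin 2)

/-- The Laplacian of `f : ℝ² → ℝ`. -/
def lap (f : R2 → ℝ) (x : R2) : ℝ :=
  ∑ i : Fin 2, fderiv ℝ (fun y => fderiv ℝ f y (EuclideanSpace.single i 1)) x
    (EuclideanSpace.single i 1)

/-- The linearized operator `L = -Δ + (1 - 3 w²)` applied to `f`. -/
def Lop (w f : R2 → ℝ) (x : R2) : ℝ := -lap f x + (1 - 3 * (w x) ^ 2) * f x

/-- `x · ∇f`. -/
def xgrad (f : R2 → ℝ) (x : R2) : ℝ := ⟪x, gradient f x⟫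

/-- First partial derivative `∂f/∂x₁`. -/
def pd1 (f : R2 → ℝ) (x : R2) : ℝ := fderiv ℝ f x (EuclideanSpace.single 0 1)

/-- `w` is the (radial positive) ground state of `Δw - w + w³ = 0` in `ℝ²`, `w ∈ H¹`. -/
structure IsGroundState (w : R2 → ℝ) : Prop where
  smooth : ContDiff ℝ 2 w
  pos : ∀ x, 0 < w x
  radial : ∀ x y : R2, ‖x‖ = ‖y‖ → w x = w y
  eqn : ∀ x, lap w x - w x + (w x) ^ 3 = 0
  sqInt : Integrable fun x => (w x) ^ 2
  quarticInt : Integrable fun x => (w x) ^ 4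
  gradSqInt : Integrable fun x => ‖gradient w x‖ ^ 2

/-- `h` is homogeneous of degree `p`. -/
def Homog (h : R2 → ℝ) (p : ℝ) : Prop :=
  ∀ t : ℝ, 0 < t → ∀ x : R2, h (t • x) = t ^ p * h x

/-- `H(y) = ∫ h(x+y) w(x)² dx`. -/
def Hfun (h w : R2 → ℝ) (y : R2) : ℝ := ∫ x, h (x + y) * (w x) ^ 2

/-- Determinant of the Hessian of `H` at `y`. -/
def hessDet (H : R2 → ℝ) (y : R2) : ℝ :=
  (fderiv ℝ (fun z => fderiv ℝ H z (EuclideanSpace.single 0 1)) y (EuclideanSpace.single 0 1)) *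
    (fderiv ℝ (fun z => fderiv ℝ H z (EuclideanSpace.single 1 1)) y (EuclideanSpace.single 1 1)) -
  (fderiv ℝ (fun z => fderiv ℝ H z (EuclideanSpace.single 0 1)) y (EuclideanSpace.single 1 1)) *
    (fderiv ℝ (fun z => fderiv ℝ H z (EuclideanSpace.single 1 1)) y (EuclideanSpace.single 0 1))

/-- The Gross–Pitaevskii energy functional. -/
def GPe (V : R2 → ℝ) (a : ℝ) (u : R2 → ℝ) : ℝ :=
  (∫ x, ‖gradient u x‖ ^ 2) + (∫ x, V x * (u x) ^ 2) - a / 2 * ∫ x, (u x) ^ 4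

/-- Admissible class: `u ∈ H¹`, `∫ V u² < ∞`, `‖u‖₂ = 1`. -/
def Admissible (V : R2 → ℝ) (u : R2 → ℝ) : Prop :=
  Integrable (fun x => (u x) ^ 2) ∧ Integrable (fun x => ‖gradient u x‖ ^ 2) ∧
    Integrable (fun x => V x * (u x) ^ 2) ∧ (∫ x, (u x) ^ 2) = 1

/-- `e(a)`, the ground state energy. -/
def gpInf (V : R2 → ℝ) (a : ℝ) : ℝ := sInf (GPe V a '' {u | Admissible V u})

/-- `u` is a positive minimizer of `e(a)`. -/
def IsPosMinimizer (V : R2 → ℝ) (a : ℝ) (u : R2 → ℝ) : Prop :=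
  Admissible V u ∧ GPe V a u = gpInf V a ∧ ∀ x, 0 < u x

/-- `x0` is the unique maximum point of `u`. -/
def IsUniqueMaxPt (u : R2 → ℝ) (x0 : R2) : Prop :=
  IsMaxOn u univ x0 ∧ ∀ z, IsMaxOn u univ z → z = x0

/-- The Lagrange multiplier `μ_a = e(a) - (a/2)∫u⁴`. -/
def lagrangeMul (V : R2 → ℝ) (a : ℝ) (u : R2 → ℝ) : ℝ :=
  gpInf V a - a / 2 * ∫ x, (u x) ^ 4

/-- A bounded function on `ℝ²`. -/
def BddFun (f : R2 → ℝ) : Prop := ∃ M, ∀ x, |f x| ≤ M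

/-!
The linearized operator `L = -Δ + 1 - 3w²` is symmetric and `L w = -2w³`, so pairing the equation
for `ψ₁` with `w` gives `-2 ∫ w³ψ₁ = ∫ w Lψ₁ = -2 - 2/p`. Symmetry is Green's identity, obtained by
integrating against cutoffs `χ(c x)` and letting `c → 0`: the boundary term
`∫ ψ₁ ∂w · c ∂χ(c x)` vanishes because `ψ₁ ∇w ∈ L²` and, in dimension two, `c ∂χ(c x)` has constant
`L²` norm while its support leaves every bounded set.

Dividing by `H(y₀)` requires `H(y₀) ≠ 0`. Uniqueness of the critical point rules out `H ≡ 0`, so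
`h(x + y)w²` is integrable for at least one `y`. On a cone around a direction where `h ≠ 0` this
integrand controls `|x|^p w²`, and since `w` is radial, rotating the cone shows `|x|^p w² ∈ L¹`.
Hence `h(x + y)w²` is integrable for every `y`, and its integral is positive.
-/

section Homogeneous

variable {E : Type*} [NormedAddCommGroup E] [NormedSpace ℝ E] {h : E → ℝ} {p : ℝ}

lemma map_zero_of_homogeneous (hp : p ≠ 0)
    (hhom : ∀ t : ℝ, 0 < t → ∀ x, h (t • x) = t ^ p * h x) : h 0 = 0 := by
  have two_rpow_ne_one : (2 : ℝ) ^ p ≠ 1 := by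
    rwa [← Real.rpow_zero 2, Ne, Real.rpow_right_inj two_pos (by norm_num)]
  exact eq_zero_of_mul_eq_self_left two_rpow_ne_one (by simpa using (hhom 2 two_pos 0).symm)

lemma exists_norm_eq_one_of_homogeneous_ne_zero (hp : p ≠ 0)
    (hhom : ∀ t : ℝ, 0 < t → ∀ x, h (t • x) = t ^ p * h x) {x : E} (hx : h x ≠ 0) :
    ∃ θ : E, ‖θ‖ = 1 ∧ h θ ≠ 0 := by
  have x_ne : x ≠ 0 := by
    rintro rfl
    exact hx (map_zero_of_homogeneous hp hhom)
  have inv_pos : 0 < ‖x‖⁻¹ := inv_pos.mpr (norm_pos_iff.mpr x_ne)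
  refine ⟨‖x‖⁻¹ • x, norm_smul_inv_norm x_ne, ?_⟩
  rw [hhom _ inv_pos]
  exact mul_ne_zero (Real.rpow_pos_of_pos inv_pos p).ne' hx

lemma exists_norm_map_add_le_of_homogeneous [ProperSpace E] (hh : Continuous h)
    (hhom : ∀ t : ℝ, 0 < t → ∀ x, h (t • x) = t ^ p * h x) (y : E) :
    ∃ C, ∀ x, ‖h (x + y)‖ ≤ C * (1 + ‖x‖ ^ p) := by
  obtain ⟨C, hC⟩ := (isCompact_closedBall (0 : E) (1 + ‖y‖)).exists_bound_of_continuousOn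
    hh.continuousOn
  have C_nonneg : 0 ≤ C := (norm_nonneg _).trans (hC 0 (Metric.mem_closedBall_self (by positivity)))
  refine ⟨C, fun x => ?_⟩
  set m : ℝ := max 1 ‖x‖ with m_def
  have one_le_m : 1 ≤ m := le_max_left _ _
  have m_pos : 0 < m := one_pos.trans_le one_le_m
  have rescaled_mem : m⁻¹ • (x + y) ∈ Metric.closedBall (0 : E) (1 + ‖y‖) := by
    rw [mem_closedBall_zero_iff, norm_smul, norm_inv, Real.norm_of_nonneg m_pos.le,
      inv_mul_le_iff₀ m_pos]
    nlinarith [norm_add_le x y, norm_nonneg y, le_max_right 1 ‖x‖]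
  have m_rpow_le : m ^ p ≤ 1 + ‖x‖ ^ p := by
    rcases max_choice 1 ‖x‖ with hm | hm <;> rw [m_def, hm]
    · simpa using Real.rpow_nonneg (norm_nonneg x) p
    · linarith
  calc ‖h (x + y)‖ = m ^ p * ‖h (m⁻¹ • (x + y))‖ := by
        rw [← Real.norm_of_nonneg (Real.rpow_nonneg m_pos.le p), ← norm_mul, ← hhom m m_pos,
          smul_inv_smul₀ m_pos.ne']
    _ ≤ m ^ p * C := by gcongr; exact hC _ rescaled_mem
    _ ≤ C * (1 + ‖x‖ ^ p) := by rw [mul_comm]; gcongr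

lemma exists_le_norm_map_add_of_homogeneous {θ : E} (hh : ContinuousAt h θ)
    (hhom : ∀ t : ℝ, 0 < t → ∀ x, h (t • x) = t ^ p * h x) (hθ : h θ ≠ 0) (y : E) :
    ∃ c > 0, ∃ R, ∃ V ∈ 𝓝 θ, ∀ x, R ≤ ‖x‖ → ‖x‖⁻¹ • x ∈ V → c * ‖x‖ ^ p ≤ ‖h (x + y)‖ := by
  have tendsto_translate : Tendsto (fun q : E × ℝ => ‖h (q.1 + q.2 • y)‖) (𝓝 θ ×ˢ 𝓝 0)
      (𝓝 ‖h θ‖) := by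
    have shift : Tendsto (fun q : E × ℝ => q.1 + q.2 • y) (𝓝 θ ×ˢ 𝓝 0) (𝓝 θ) := by
      simpa using (tendsto_fst (f := 𝓝 θ) (g := 𝓝 (0 : ℝ))).add (tendsto_snd.smul_const y)
    exact (hh.tendsto.comp shift).norm
  obtain ⟨V, hV, S, hS, lower⟩ := mem_prod_iff.mp
    (tendsto_translate.eventually (lt_mem_nhds (half_lt_self (norm_pos_iff.mpr hθ))))
  obtain ⟨R, hR⟩ := eventually_atTop.mp
    ((tendsto_inv_atTop_zero.eventually hS).and (eventually_gt_atTop (0 : ℝ)))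
  refine ⟨‖h θ‖ / 2, half_pos (norm_pos_iff.mpr hθ), R, V, hV, fun x hx x_mem => ?_⟩
  obtain ⟨inv_mem, x_pos⟩ := hR ‖x‖ hx
  have lower_x : ‖h θ‖ / 2 < ‖h (‖x‖⁻¹ • x + ‖x‖⁻¹ • y)‖ := lower (mk_mem_prod x_mem inv_mem)
  calc ‖h θ‖ / 2 * ‖x‖ ^ p ≤ ‖h (‖x‖⁻¹ • (x + y))‖ * ‖x‖ ^ p := by
        rw [smul_add]
        gcongr
    _ = ‖h (x + y)‖ := by
        rw [mul_comm, ← Real.norm_of_nonneg (Real.rpow_nonneg x_pos.le p), ← norm_mul,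
          ← hhom _ x_pos, smul_inv_smul₀ x_pos.ne']

end Homogeneous

section Radial

variable {E : Type*} [NormedAddCommGroup E] [InnerProductSpace ℝ E] [FiniteDimensional ℝ E]
  [MeasurableSpace E] [BorelSpace E]

/-- Finitely many reflected copies of the cone over `V` cover `E \ {0}`, and a radial function is
integrable on each of them. -/
lemma integrable_of_radial_of_integrableOn_cone {F : Type*} [NormedAddCommGroup F] {f : E → F}
    (hf : ∀ x y, ‖x‖ = ‖y‖ → f x = f y) {θ : E} (hθ : ‖θ‖ = 1) {V : Set E} (hV : V ∈ 𝓝 θ)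
    (hcone : IntegrableOn f ((fun x => ‖x‖⁻¹ • x) ⁻¹' V)) : Integrable f := by
  have punctured : IntegrableOn f ((fun x => ‖x‖⁻¹ • x) ⁻¹' Metric.sphere 0 1) := by
    refine (isCompact_sphere (0 : E) 1).induction_on
      (p := fun S => IntegrableOn f ((fun x : E => ‖x‖⁻¹ • x) ⁻¹' S) volume) (by simp)
      (fun _ _ hst ht => ht.mono_set (preimage_mono hst)) (fun _ _ hs ht => hs.union ht)
      fun ω hω => ?_
    obtain ⟨A, hA⟩ : ∃ A : E ≃ₗᵢ[ℝ] E, A ω = θ :=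
      ⟨_, Submodule.reflection_sub ((mem_sphere_zero_iff_norm.mp hω).trans hθ.symm)⟩
    refine ⟨A ⁻¹' V, mem_nhdsWithin_of_mem_nhds
      (A.continuous.continuousAt.preimage_mem_nhds (hA ▸ hV)), ?_⟩
    have reflected := (A.measurePreserving.integrableOn_comp_preimage
      A.toHomeomorph.measurableEmbedding).mpr hcone
    have comp_eq : f ∘ A = f := funext fun x => hf _ _ (A.norm_map x)
    simpa [comp_eq, ← preimage_comp, Function.comp_def] using reflected
  rw [← integrableOn_univ]
  have origin : IntegrableOn f {(0 : E)} :=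
    integrableOn_singleton (by simp) measure_singleton_lt_top
  refine (punctured.union origin).mono_set fun x _ => ?_
  rcases eq_or_ne x 0 with rfl | hx
  · exact Or.inr rfl
  · exact Or.inl (by simpa using norm_smul_inv_norm (𝕜 := ℝ) hx)

variable {h k : E → ℝ} {p : ℝ}

lemma integrable_norm_rpow_mul_of_radial (hp : 0 < p) (hk : Integrable k)
    (hk_radial : ∀ x y, ‖x‖ = ‖y‖ → k x = k y) (hh : Continuous h)
    (hhom : ∀ t : ℝ, 0 < t → ∀ x, h (t • x) = t ^ p * h x) {x₀ y : E} (hx₀ : h x₀ ≠ 0)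
    (hint : Integrable fun x => h (x + y) * k x) :
    Integrable fun x => ‖x‖ ^ p * k x := by
  obtain ⟨θ, norm_θ, hθ⟩ := exists_norm_eq_one_of_homogeneous_ne_zero hp.ne' hhom hx₀
  obtain ⟨c, c_pos, R, V, hV, lower⟩ :=
    exists_le_norm_map_add_of_homogeneous hh.continuousAt hhom hθ y
  have norm_rpow_cont : Continuous fun x : E => ‖x‖ ^ p :=
    continuous_norm.rpow_const fun _ => Or.inr hp.le
  have meas : AEStronglyMeasurable (fun x => ‖x‖ ^ p * k x) :=
    norm_rpow_cont.aestronglyMeasurable.mul hk.aestronglyMeasurable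
  have near : IntegrableOn (fun x => ‖x‖ ^ p * k x) (Metric.closedBall 0 R) :=
    hk.integrableOn.continuousOn_mul norm_rpow_cont.continuousOn (isCompact_closedBall 0 R)
  have lower_mul : ∀ x, R ≤ ‖x‖ → ‖x‖⁻¹ • x ∈ V →
      ‖‖x‖ ^ p * k x‖ ≤ c⁻¹ * ‖h (x + y) * k x‖ := fun x hx x_mem => by
    rw [norm_mul, norm_mul, ← mul_assoc, Real.norm_of_nonneg (by positivity)]
    gcongr
    exact (le_inv_mul_iff₀ c_pos).mpr (lower x hx x_mem)
  have far : IntegrableOn (fun x => ‖x‖ ^ p * k x)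
      {x | R ≤ ‖x‖ ∧ ‖x‖⁻¹ • x ∈ interior V} := by
    have far_meas : MeasurableSet {x : E | R ≤ ‖x‖ ∧ ‖x‖⁻¹ • x ∈ interior V} := by
      have dir_meas : Measurable fun x : E => ‖x‖⁻¹ • x := by fun_prop
      exact (measurableSet_le measurable_const measurable_norm).inter
        (dir_meas isOpen_interior.measurableSet)
    exact Integrable.mono' (hint.norm.const_mul c⁻¹).integrableOn meas.restrict
      (ae_restrict_of_forall_mem far_meas fun x hx => lower_mul x hx.1 (interior_subset hx.2))
  refine integrable_of_radial_of_integrableOn_cone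
    (fun x y hxy => by rw [hxy, hk_radial x y hxy]) norm_θ (interior_mem_nhds.mpr hV)
    ((near.union far).mono_set fun x hx => ?_)
  rcases le_total ‖x‖ R with hxR | hxR
  · exact Or.inl (mem_closedBall_zero_iff.mpr hxR)
  · exact Or.inr ⟨hxR, hx⟩

lemma integrable_homogeneous_translate_mul (hp : 0 < p) (hk : Integrable k)
    (hk_radial : ∀ x y, ‖x‖ = ‖y‖ → k x = k y) (hh : Continuous h)
    (hhom : ∀ t : ℝ, 0 < t → ∀ x, h (t • x) = t ^ p * h x) {y : E}
    (hint : Integrable fun x => h (x + y) * k x) (z : E) :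
    Integrable fun x => h (x + z) * k x := by
  by_cases h_zero : ∀ x, h x = 0
  · simp [h_zero]
  obtain ⟨x₀, hx₀⟩ := not_forall.mp h_zero
  obtain ⟨C, hC⟩ := exists_norm_map_add_le_of_homogeneous hh hhom z
  have weight := hk.add (integrable_norm_rpow_mul_of_radial hp hk hk_radial hh hhom hx₀ hint)
  refine Integrable.mono' (weight.norm.const_mul C)
    ((by fun_prop : Continuous fun x => h (x + z)).aestronglyMeasurable.mul
      hk.aestronglyMeasurable) (Eventually.of_forall fun x => ?_)
  calc ‖h (x + z) * k x‖ ≤ C * (1 + ‖x‖ ^ p) * ‖k x‖ := by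
        rw [norm_mul]; gcongr; exact hC x
    _ = C * ‖k x + ‖x‖ ^ p * k x‖ := by
        rw [← one_add_mul, norm_mul, Real.norm_of_nonneg (by positivity : 0 ≤ 1 + ‖x‖ ^ p),
          mul_assoc]

end Radial

lemma exists_ne_zero_of_forall_gradient_eq_zero {E : Type*} [NormedAddCommGroup E]
    [InnerProductSpace ℝ E] [CompleteSpace E] [Nontrivial E] {f : E → ℝ} {y₀ : E}
    (hf : ∀ y, gradient f y = 0 → y = y₀) : ∃ y, f y ≠ 0 := by
  by_contra! f_zero
  obtain ⟨y, hy⟩ := exists_ne y₀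
  exact hy (hf y (by simp [gradient, funext f_zero]))

lemma Hfun_pos {w h : R2 → ℝ} {p : ℝ} (hw : IsGroundState w) (hp : 0 < p) (hh : Continuous h)
    (hnonneg : ∀ x, 0 ≤ h x) (hhom : Homog h p) {y : R2} (hy : Hfun h w y ≠ 0) (z : R2) :
    0 < Hfun h w z := by
  have w_cont := hw.smooth.continuous
  have integrable_y : Integrable fun x => h (x + y) * w x ^ 2 := by
    by_contra not_integrable
    exact hy (integral_undef not_integrable)
  have integrable_z : Integrable fun x => h (x + z) * w x ^ 2 :=
    integrable_homogeneous_translate_mul hp hw.sqInt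
      (fun x₁ x₂ hx => by rw [hw.radial x₁ x₂ hx]) hh hhom integrable_y z
  obtain ⟨x₀, hx₀⟩ : ∃ x, h x ≠ 0 := by
    by_contra! h_zero
    exact hy (by simp [Hfun, h_zero])
  refine integral_pos_of_integrable_nonneg_nonzero (x := x₀ - z) (by fun_prop) integrable_z
    (fun x => mul_nonneg (hnonneg _) (sq_nonneg _)) ?_
  rw [sub_add_cancel]
  exact mul_ne_zero hx₀ (pow_ne_zero 2 (hw.pos _).ne')

lemma integrable_mul_of_hasCompactSupport_left {X : Type*} [TopologicalSpace X]
    [MeasurableSpace X] [OpensMeasurableSpace X] {μ : Measure X} [IsFiniteMeasureOnCompacts μ]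
    {η u : X → ℝ} (hη : Continuous η) (hη_supp : HasCompactSupport η) (hu : Continuous u) :
    Integrable (fun x => η x * u x) μ :=
  (hη.mul hu).integrable_of_hasCompactSupport hη_supp.mul_right

/-- The directional derivative `∂_v f` as a function of the base point, so that it can be iterated:
`lap f x` is by definition `∑ i, dirDeriv eᵢ (dirDeriv eᵢ f) x`. -/
def dirDeriv {E : Type*} [NormedAddCommGroup E] [NormedSpace ℝ E] (v : E) (f : E → ℝ) (x : E) : ℝ :=
  fderiv ℝ f x v

section DirDeriv

variable {E : Type*} [NormedAddCommGroup E] [NormedSpace ℝ E] {f g : E → ℝ} {v : E}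

lemma continuous_dirDeriv (hf : ContDiff ℝ 1 f) : Continuous (dirDeriv v f) :=
  (hf.continuous_fderiv one_ne_zero).clm_apply continuous_const

lemma contDiff_dirDeriv (hf : ContDiff ℝ 2 f) : ContDiff ℝ 1 (dirDeriv v f) :=
  (hf.fderiv_right (m := 1) (by norm_num)).clm_apply contDiff_const

lemma hasCompactSupport_dirDeriv (hf : HasCompactSupport f) : HasCompactSupport (dirDeriv v f) :=
  hf.fderiv_apply ℝ v

lemma dirDeriv_eventuallyEq_zero {x : E} {a : ℝ} (hf : f =ᶠ[𝓝 x] fun _ => a) :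
    dirDeriv v f =ᶠ[𝓝 x] 0 := by
  filter_upwards [hf.fderiv (𝕜 := ℝ)] with y hy
  simp [dirDeriv, hy]

lemma dirDeriv_comp_smul (v : E) (f : E → ℝ) (c : ℝ) :
    dirDeriv v (fun x => f (c • x)) = fun x => c * dirDeriv v f (c • x) := by
  funext x
  simp [dirDeriv, fderiv_comp_smul]

lemma dirDeriv_const_mul (hf : Differentiable ℝ f) (c : ℝ) :
    dirDeriv v (fun x => c * f x) = fun x => c * dirDeriv v f x := by
  funext x
  simp [dirDeriv, fderiv_const_mul (hf x)]

lemma dirDeriv_dirDeriv_comp_smul (hf : ContDiff ℝ 2 f) (c : ℝ) :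
    dirDeriv v (dirDeriv v fun x => f (c • x)) =
      fun x => c ^ 2 * dirDeriv v (dirDeriv v f) (c • x) := by
  have deriv_diff : Differentiable ℝ fun x => dirDeriv v f (c • x) :=
    ((contDiff_dirDeriv hf).differentiable one_ne_zero).comp (differentiable_id.const_smul c)
  rw [dirDeriv_comp_smul, dirDeriv_const_mul deriv_diff, dirDeriv_comp_smul]
  funext x
  ring

lemma dirDeriv_add (hf : Differentiable ℝ f) (hg : Differentiable ℝ g) :
    dirDeriv v (f + g) = dirDeriv v f + dirDeriv v g := by
  funext x
  simp [dirDeriv, fderiv_add (hf x) (hg x)]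

lemma dirDeriv_mul (hf : Differentiable ℝ f) (hg : Differentiable ℝ g) :
    dirDeriv v (f * g) = f * dirDeriv v g + g * dirDeriv v f := by
  funext x
  simp [dirDeriv, fderiv_mul (hf x) (hg x)]

lemma dirDeriv_dirDeriv_mul (hf : ContDiff ℝ 2 f) (hg : ContDiff ℝ 2 g) :
    dirDeriv v (dirDeriv v (f * g)) =
      f * dirDeriv v (dirDeriv v g) + 2 * (dirDeriv v f * dirDeriv v g) +
        g * dirDeriv v (dirDeriv v f) := by
  have f_diff := hf.differentiable two_ne_zero
  have g_diff := hg.differentiable two_ne_zero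
  have f'_diff := (contDiff_dirDeriv (v := v) hf).differentiable one_ne_zero
  have g'_diff := (contDiff_dirDeriv (v := v) hg).differentiable one_ne_zero
  rw [dirDeriv_mul f_diff g_diff, dirDeriv_add (f_diff.mul g'_diff) (g_diff.mul f'_diff),
    dirDeriv_mul f_diff g'_diff, dirDeriv_mul g_diff f'_diff]
  ring

variable [FiniteDimensional ℝ E] [MeasurableSpace E] [BorelSpace E] {μ : Measure E}
  [μ.IsAddHaarMeasure] {η u : E → ℝ}

lemma integral_mul_dirDeriv (hη : ContDiff ℝ 1 η) (hη_supp : HasCompactSupport η)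
    (hu : ContDiff ℝ 1 u) :
    ∫ x, η x * dirDeriv v u x ∂μ = -∫ x, dirDeriv v η x * u x ∂μ :=
  integral_mul_fderiv_eq_neg_fderiv_mul_of_integrable
    (integrable_mul_of_hasCompactSupport_left (continuous_dirDeriv hη)
      (hasCompactSupport_dirDeriv hη_supp) hu.continuous)
    (integrable_mul_of_hasCompactSupport_left hη.continuous hη_supp (continuous_dirDeriv hu))
    (integrable_mul_of_hasCompactSupport_left hη.continuous hη_supp hu.continuous)
    (fun x _ => hη.differentiable one_ne_zero x) (fun x _ => hu.differentiable one_ne_zero x)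

lemma integral_mul_dirDeriv_dirDeriv (hη : ContDiff ℝ 2 η) (hη_supp : HasCompactSupport η)
    (hu : ContDiff ℝ 2 u) :
    ∫ x, η x * dirDeriv v (dirDeriv v u) x ∂μ = ∫ x, dirDeriv v (dirDeriv v η) x * u x ∂μ := by
  rw [integral_mul_dirDeriv (hη.of_le one_le_two) hη_supp (contDiff_dirDeriv hu),
    integral_mul_dirDeriv (contDiff_dirDeriv hη) (hasCompactSupport_dirDeriv hη_supp)
      (hu.of_le one_le_two), neg_neg]

lemma integral_mul_green_eq (hη : ContDiff ℝ 2 η) (hη_supp : HasCompactSupport η)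
    (hf : ContDiff ℝ 2 f) (hg : ContDiff ℝ 2 g) :
    ∫ x, η x * (f x * dirDeriv v (dirDeriv v g) x - g x * dirDeriv v (dirDeriv v f) x) ∂μ =
      2 * ∫ x, dirDeriv v η x * (g x * dirDeriv v f x) ∂μ +
        ∫ x, dirDeriv v (dirDeriv v η) x * (f x * g x) ∂μ := by
  have ηf_smooth : ContDiff ℝ 2 (η * f) := hη.mul hf
  have ηf_supp : HasCompactSupport (η * f) := hη_supp.mul_right
  have η'_supp := hasCompactSupport_dirDeriv (v := v) hη_supp
  have int_ηf : Integrable (fun x => (η * f) x * dirDeriv v (dirDeriv v g) x) μ :=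
    integrable_mul_of_hasCompactSupport_left ηf_smooth.continuous ηf_supp
      (continuous_dirDeriv (contDiff_dirDeriv hg))
  have int_ηf'' : Integrable (fun x => dirDeriv v (dirDeriv v (η * f)) x * g x) μ :=
    integrable_mul_of_hasCompactSupport_left (continuous_dirDeriv (contDiff_dirDeriv ηf_smooth))
      (hasCompactSupport_dirDeriv (hasCompactSupport_dirDeriv ηf_supp)) hg.continuous
  have int_η' : Integrable (fun x => dirDeriv v η x * (g x * dirDeriv v f x)) μ :=
    integrable_mul_of_hasCompactSupport_left (continuous_dirDeriv (hη.of_le one_le_two)) η'_supp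
      (hg.continuous.mul (continuous_dirDeriv (hf.of_le one_le_two)))
  have int_η'' : Integrable (fun x => dirDeriv v (dirDeriv v η) x * (f x * g x)) μ :=
    integrable_mul_of_hasCompactSupport_left (continuous_dirDeriv (contDiff_dirDeriv hη))
      (hasCompactSupport_dirDeriv η'_supp) (hf.continuous.mul hg.continuous)
  calc ∫ x, η x * (f x * dirDeriv v (dirDeriv v g) x - g x * dirDeriv v (dirDeriv v f) x) ∂μ
      = ∫ x, ((η * f) x * dirDeriv v (dirDeriv v g) x - dirDeriv v (dirDeriv v (η * f)) x * g x) +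
          (2 * (dirDeriv v η x * (g x * dirDeriv v f x)) +
            dirDeriv v (dirDeriv v η) x * (f x * g x)) ∂μ := by
        rw [dirDeriv_dirDeriv_mul hη hf]
        congr 1 with x
        simp only [Pi.add_apply, Pi.mul_apply, Pi.ofNat_apply]
        ring
    _ = 2 * ∫ x, dirDeriv v η x * (g x * dirDeriv v f x) ∂μ +
          ∫ x, dirDeriv v (dirDeriv v η) x * (f x * g x) ∂μ := by
        rw [integral_add, integral_sub int_ηf int_ηf'',
          integral_mul_dirDeriv_dirDeriv ηf_smooth ηf_supp hg, sub_self, zero_add,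
          integral_add (int_η'.const_mul 2) int_η'', integral_const_mul]
        exacts [int_ηf.sub int_ηf'', (int_η'.const_mul 2).add int_η'']

end DirDeriv

section Dilation

variable {E : Type*} [NormedAddCommGroup E] [NormedSpace ℝ E] [MeasurableSpace E] [BorelSpace E]
  {μ : Measure E} {f g : E → ℝ}

lemma tendsto_integral_mul_comp_smul [SecondCountableTopology E] (hf : Integrable f μ)
    (hg : Continuous g) {M : ℝ} (hM : ∀ x, ‖g x‖ ≤ M) :
    Tendsto (fun c : ℝ => ∫ x, f x * g (c • x) ∂μ) (𝓝 0) (𝓝 (∫ x, f x * g 0 ∂μ)) := by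
  refine tendsto_integral_filter_of_dominated_convergence (fun x => ‖f x‖ * M)
    (Eventually.of_forall fun c => hf.aestronglyMeasurable.mul (by fun_prop))
    (Eventually.of_forall fun c => Eventually.of_forall fun x => ?_) (hf.norm.mul_const M)
    (Eventually.of_forall fun x => ?_)
  · rw [norm_mul]
    gcongr
    exact hM _
  · have g_lim : Tendsto (fun c : ℝ => g (c • x)) (𝓝 0) (𝓝 (g ((0 : ℝ) • x))) :=
      (by fun_prop : Continuous fun c : ℝ => g (c • x)).tendsto 0
    rw [zero_smul] at g_lim
    exact g_lim.const_mul (f x)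

lemma abs_integral_mul_le_sqrt_mul_sqrt {α : Type*} [MeasurableSpace α] {ν : Measure α}
    {a b : α → ℝ} (ha : MemLp a 2 ν) (hb : MemLp b 2 ν) :
    |∫ x, a x * b x ∂ν| ≤ √(∫ x, a x ^ 2 ∂ν) * √(∫ x, b x ^ 2 ∂ν) := by
  have holder := integral_mul_norm_le_Lp_mul_Lq (μ := ν) (f := a) (g := b)
    Real.HolderConjugate.two_two (by simpa using ha) (by simpa using hb)
  refine (abs_integral_le_integral_abs).trans ?_
  simpa [abs_mul, Real.sqrt_eq_rpow] using holder

lemma tendsto_integral_sq_indicator_comp_smul_ne_zero (hf : Integrable (fun x => f x ^ 2) μ)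
    (hg : Continuous g) (hg0 : g =ᶠ[𝓝 0] 0) :
    Tendsto (fun c : ℝ => ∫ x, {x | g (c • x) ≠ 0}.indicator (fun x => f x ^ 2) x ∂μ) (𝓝 0)
      (𝓝 0) := by
  have set_meas (c : ℝ) : MeasurableSet {x | g (c • x) ≠ 0} :=
    (isOpen_ne_fun (by fun_prop) continuous_const).measurableSet
  suffices Tendsto (fun c : ℝ => ∫ x, {x | g (c • x) ≠ 0}.indicator (fun x => f x ^ 2) x ∂μ) (𝓝 0)
      (𝓝 (∫ _, (0 : ℝ) ∂μ)) by rwa [integral_zero] at this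
  refine tendsto_integral_filter_of_dominated_convergence (fun x => ‖f x ^ 2‖)
    (Eventually.of_forall fun c => hf.aestronglyMeasurable.indicator (set_meas c))
    (Eventually.of_forall fun c => Eventually.of_forall fun x => norm_indicator_le_norm_self _ _)
    hf.norm (Eventually.of_forall fun x => tendsto_const_nhds.congr' ?_)
  have smul_lim : Tendsto (fun c : ℝ => c • x) (𝓝 0) (𝓝 0) := by
    simpa using (tendsto_id (x := 𝓝 (0 : ℝ))).smul_const x
  filter_upwards [smul_lim.eventually hg0] with c hc
  rw [indicator_of_notMem (by simpa using hc)]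

variable [FiniteDimensional ℝ E] [μ.IsAddHaarMeasure]

lemma integral_sq_dilation (g : E → ℝ) {c : ℝ} (hc : 0 < c) :
    ∫ x, (c ^ (Module.finrank ℝ E / 2 : ℝ) * g (c • x)) ^ 2 ∂μ = ∫ x, g x ^ 2 ∂μ := by
  have normalization : (c ^ (Module.finrank ℝ E / 2 : ℝ)) ^ 2 = c ^ Module.finrank ℝ E := by
    rw [← Real.rpow_mul_natCast hc.le, Nat.cast_two, div_mul_cancel₀ _ two_ne_zero,
      Real.rpow_natCast]
  simp_rw [mul_pow, normalization]
  rw [integral_const_mul, Measure.integral_comp_smul_of_nonneg μ (fun x => g x ^ 2) c (hR := hc.le),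
    smul_eq_mul, mul_inv_cancel_left₀ (by positivity)]

lemma memLp_two_dilation (hg : Continuous g) (hg2 : MemLp g 2 μ) {c : ℝ} (hc : 0 < c) (a : ℝ) :
    MemLp (fun x => a * g (c • x)) 2 μ := by
  refine MemLp.const_mul ?_ a
  rw [memLp_two_iff_integrable_sq (by fun_prop)]
  exact hg2.integrable_sq.comp_smul hc.ne'

/-- The dilations have constant `L²` norm, while their supports leave every bounded set. -/
lemma tendsto_integral_mul_dilation (hf : MemLp f 2 μ) (hg : Continuous g) (hg2 : MemLp g 2 μ)
    (hg0 : g =ᶠ[𝓝 0] 0) :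
    Tendsto (fun c : ℝ => ∫ x, f x * (c ^ (Module.finrank ℝ E / 2 : ℝ) * g (c • x)) ∂μ)
      (𝓝[>] 0) (𝓝 0) := by
  set tail : ℝ → ℝ := fun c => ∫ x, {x | g (c • x) ≠ 0}.indicator (fun x => f x ^ 2) x ∂μ
  have tail_lim : Tendsto (fun c => √(tail c) * √(∫ x, g x ^ 2 ∂μ)) (𝓝[>] 0) (𝓝 0) := by
    have sq_lim := (tendsto_integral_sq_indicator_comp_smul_ne_zero hf.integrable_sq hg
      hg0).mono_left (nhdsWithin_le_nhds (s := Ioi 0))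
    simpa using sq_lim.sqrt.mul_const √(∫ x, g x ^ 2 ∂μ)
  refine squeeze_zero_norm' ?_ tail_lim
  filter_upwards [self_mem_nhdsWithin] with c hc
  set S : Set E := {x | g (c • x) ≠ 0}
  have S_meas : MeasurableSet S := (isOpen_ne_fun (by fun_prop) continuous_const).measurableSet
  have restrict_to_S (x : E) : f x * (c ^ (Module.finrank ℝ E / 2 : ℝ) * g (c • x)) =
      S.indicator f x * (c ^ (Module.finrank ℝ E / 2 : ℝ) * g (c • x)) := by
    by_cases hx : x ∈ S
    · rw [indicator_of_mem hx]
    · rw [not_not.mp hx, mul_zero, mul_zero, mul_zero]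
  have sq_indicator (x : E) : S.indicator f x ^ 2 = S.indicator (fun x => f x ^ 2) x := by
    by_cases hx : x ∈ S <;> simp [hx]
  have cauchy_schwarz := abs_integral_mul_le_sqrt_mul_sqrt (hf.indicator S_meas)
    (memLp_two_dilation hg hg2 hc (c ^ (Module.finrank ℝ E / 2 : ℝ)))
  simpa only [restrict_to_S, Real.norm_eq_abs, sq_indicator, integral_sq_dilation g hc]
    using cauchy_schwarz

end Dilation

section Green

variable {E : Type*} [NormedAddCommGroup E] [NormedSpace ℝ E] [FiniteDimensional ℝ E]
  [MeasurableSpace E] [BorelSpace E] {μ : Measure E} [μ.IsAddHaarMeasure]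
  {χ f g : E → ℝ} {v : E}

lemma integral_dilated_cutoff_mul_green_eq (hχ : ContDiff ℝ 2 χ) (hχ_supp : HasCompactSupport χ)
    (hf : ContDiff ℝ 2 f) (hg : ContDiff ℝ 2 g) {c : ℝ} (hc : 0 < c) :
    ∫ x, χ (c • x) *
        (f x * dirDeriv v (dirDeriv v g) x - g x * dirDeriv v (dirDeriv v f) x) ∂μ =
      2 * ∫ x, g x * dirDeriv v f x * (c * dirDeriv v χ (c • x)) ∂μ +
        c ^ 2 * ∫ x, f x * g x * dirDeriv v (dirDeriv v χ) (c • x) ∂μ := by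
  rw [integral_mul_green_eq (η := fun x => χ (c • x)) (hχ.comp (contDiff_const_smul c))
    (hχ_supp.comp_smul hc.ne') hf hg, dirDeriv_dirDeriv_comp_smul hχ, dirDeriv_comp_smul,
    ← integral_const_mul (c ^ 2)]
  simp only [mul_comm, mul_left_comm, mul_assoc]

/-- In dimension two `c ∂χ(c x)` is an `L²`-normalized dilation. -/
lemma tendsto_integral_dilated_cutoff_mul_green (hE : Module.finrank ℝ E = 2)
    (hχ : ContDiff ℝ 2 χ) (hχ_supp : HasCompactSupport χ) (hχ_one : χ =ᶠ[𝓝 0] 1)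
    (hf : ContDiff ℝ 2 f) (hg : ContDiff ℝ 2 g) (hfg : Integrable (fun x => f x * g x) μ)
    (hgf' : MemLp (fun x => g x * dirDeriv v f x) 2 μ) :
    Tendsto (fun c : ℝ => ∫ x, χ (c • x) *
        (f x * dirDeriv v (dirDeriv v g) x - g x * dirDeriv v (dirDeriv v f) x) ∂μ)
      (𝓝[>] 0) (𝓝 0) := by
  have χ'_cont := continuous_dirDeriv (v := v) (hχ.of_le one_le_two)
  have χ'_supp := hasCompactSupport_dirDeriv (v := v) hχ_supp
  have χ''_cont := continuous_dirDeriv (v := v) (contDiff_dirDeriv (v := v) hχ)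
  obtain ⟨M, hM⟩ := χ''_cont.bounded_above_of_compact_support (hasCompactSupport_dirDeriv χ'_supp)
  have first_order : Tendsto
      (fun c : ℝ => ∫ x, g x * dirDeriv v f x * (c * dirDeriv v χ (c • x)) ∂μ)
      (𝓝[>] 0) (𝓝 0) := by
    simpa [hE] using tendsto_integral_mul_dilation hgf' χ'_cont
      (χ'_cont.memLp_of_hasCompactSupport χ'_supp) (dirDeriv_eventuallyEq_zero hχ_one)
  have second_order : Tendsto
      (fun c : ℝ => c ^ 2 * ∫ x, f x * g x * dirDeriv v (dirDeriv v χ) (c • x) ∂μ)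
      (𝓝[>] 0) (𝓝 0) := by
    have sq_lim : Tendsto (fun c : ℝ => c ^ 2) (𝓝 0) (𝓝 0) := by
      simpa using (continuous_pow 2).tendsto (0 : ℝ)
    simpa using (sq_lim.mul (tendsto_integral_mul_comp_smul hfg χ''_cont hM)).mono_left
      nhdsWithin_le_nhds
  have sum_lim := (first_order.const_mul 2).add second_order
  rw [mul_zero, add_zero] at sum_lim
  refine sum_lim.congr' ?_
  filter_upwards [self_mem_nhdsWithin] with c hc
  exact (integral_dilated_cutoff_mul_green_eq hχ hχ_supp hf hg hc).symm

end Green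

lemma exists_contDiff_hasCompactSupport_eventuallyEq_one (E : Type*) [NormedAddCommGroup E]
    [NormedSpace ℝ E] [FiniteDimensional ℝ E] (n : ℕ∞) :
    ∃ χ : E → ℝ, ContDiff ℝ n χ ∧ HasCompactSupport χ ∧ χ =ᶠ[𝓝 0] 1 :=
  let bump : ContDiffBump (0 : E) := ⟨1, 2, one_pos, one_lt_two⟩
  ⟨bump, bump.contDiff, bump.hasCompactSupport, bump.eventuallyEq_one⟩

section Gradient

variable {E : Type*} [NormedAddCommGroup E] [InnerProductSpace ℝ E] [CompleteSpace E]

lemma abs_dirDeriv_le_norm_gradient (f : E → ℝ) (v x : E) :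
    |dirDeriv v f x| ≤ ‖gradient f x‖ * ‖v‖ := by
  have norm_gradient : ‖gradient f x‖ = ‖fderiv ℝ f x‖ := by simp [gradient]
  rw [norm_gradient]
  exact (fderiv ℝ f x).le_opNorm v

lemma memLp_two_mul_dirDeriv [MeasurableSpace E] [BorelSpace E] [SecondCountableTopology E]
    {μ : Measure E} {f g : E → ℝ} {M : ℝ} (hf : ContDiff ℝ 1 f)
    (hf_grad : Integrable (fun x => ‖gradient f x‖ ^ 2) μ) (hg : Continuous g)
    (hM : ∀ x, |g x| ≤ M) (v : E) : MemLp (fun x => g x * dirDeriv v f x) 2 μ := by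
  have meas := (hg.mul (continuous_dirDeriv (v := v) hf)).aestronglyMeasurable (μ := μ)
  refine (memLp_two_iff_integrable_sq meas).mpr
    (Integrable.mono' (hf_grad.const_mul ((M * ‖v‖) ^ 2)) (meas.pow 2)
      (Eventually.of_forall fun x => ?_))
  have bound : |g x * dirDeriv v f x| ≤ M * (‖gradient f x‖ * ‖v‖) := by
    rw [abs_mul]
    exact mul_le_mul (hM x) (abs_dirDeriv_le_norm_gradient f v x) (abs_nonneg _)
      ((abs_nonneg _).trans (hM x))
  calc ‖(g x * dirDeriv v f x) ^ 2‖ = |g x * dirDeriv v f x| ^ 2 := by simp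
    _ ≤ (M * (‖gradient f x‖ * ‖v‖)) ^ 2 := by gcongr
    _ = (M * ‖v‖) ^ 2 * ‖gradient f x‖ ^ 2 := by ring

end Gradient

lemma integral_mul_lap_sub_mul_lap_eq_zero {u v : R2 → ℝ} (hu : ContDiff ℝ 2 u)
    (hu_grad : Integrable fun x => ‖gradient u x‖ ^ 2) (hv : ContDiff ℝ 2 v) (hv_bdd : BddFun v)
    (huv : Integrable fun x => u x * v x)
    (hint : Integrable fun x => u x * lap v x - v x * lap u x) :
    ∫ x, (u x * lap v x - v x * lap u x) = 0 := by
  obtain ⟨χ, hχ, χ_supp, χ_one⟩ := exists_contDiff_hasCompactSupport_eventuallyEq_one R2 2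
  obtain ⟨_, hχ_bound⟩ := hχ.continuous.bounded_above_of_compact_support χ_supp
  obtain ⟨_, hv_bound⟩ := hv_bdd
  let e (i : Fin 2) : R2 := EuclideanSpace.single i 1
  let green (i : Fin 2) (x : R2) : ℝ :=
    u x * dirDeriv (e i) (dirDeriv (e i) v) x - v x * dirDeriv (e i) (dirDeriv (e i) u) x
  have green_cont (i : Fin 2) : Continuous (green i) :=
    (hu.continuous.mul (continuous_dirDeriv (contDiff_dirDeriv hv))).sub
      (hv.continuous.mul (continuous_dirDeriv (contDiff_dirDeriv hu)))
  have sum_green (x : R2) : u x * lap v x - v x * lap u x = ∑ i, green i x := by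
    simp only [green, Finset.sum_sub_distrib, ← Finset.mul_sum]
    rfl
  have χ_zero : χ 0 = 1 := χ_one.eq_of_nhds
  have to_integral : Tendsto
      (fun c : ℝ => ∫ x, (u x * lap v x - v x * lap u x) * χ (c • x)) (𝓝[>] 0)
      (𝓝 (∫ x, (u x * lap v x - v x * lap u x))) := by
    simpa [χ_zero] using (tendsto_integral_mul_comp_smul hint hχ.continuous hχ_bound).mono_left
      (nhdsWithin_le_nhds (s := Ioi 0))
  have green_lim (i : Fin 2) :
      Tendsto (fun c : ℝ => ∫ x, χ (c • x) * green i x) (𝓝[>] 0) (𝓝 0) :=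
    tendsto_integral_dilated_cutoff_mul_green (by simp) hχ χ_supp χ_one hu hv huv
      (memLp_two_mul_dirDeriv (hu.of_le one_le_two) hu_grad hv.continuous hv_bound (e i))
  have to_zero := tendsto_finsetSum Finset.univ fun i _ => green_lim i
  rw [Finset.sum_const_zero] at to_zero
  refine tendsto_nhds_unique to_integral (to_zero.congr' ?_)
  filter_upwards [self_mem_nhdsWithin] with c hc
  rw [← integral_finsetSum _ fun i _ => integrable_mul_of_hasCompactSupport_left
    (by fun_prop) (χ_supp.comp_smul hc.ne') (green_cont i)]
  simp only [sum_green, Finset.sum_mul, mul_comm]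

lemma Lop_self {w : R2 → ℝ} (hw : IsGroundState w) (x : R2) : Lop w w x = -2 * w x ^ 3 := by
  rw [Lop]
  linear_combination -hw.eqn x

lemma integral_cube_mul_eq_neg_half_integral_mul_Lop {w ψ : R2 → ℝ} (hw : IsGroundState w)
    (hψ : ContDiff ℝ 2 ψ) (hψ_bdd : BddFun ψ) (hcube : Integrable fun x => w x ^ 3 * ψ x)
    (hmul : Integrable fun x => w x * ψ x) (hLop : Integrable fun x => w x * Lop w ψ x) :
    ∫ x, w x ^ 3 * ψ x = -(1 / 2) * ∫ x, w x * Lop w ψ x := by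
  have green_integrand (x : R2) :
      w x * lap ψ x - ψ x * lap w x = -2 * (w x ^ 3 * ψ x) - w x * Lop w ψ x := by
    have Lop_w := Lop_self hw x
    rw [Lop] at Lop_w ⊢
    linear_combination ψ x * Lop_w
  have green_integrable : Integrable fun x => w x * lap ψ x - ψ x * lap w x := by
    simp only [green_integrand]
    exact (hcube.const_mul (-2)).sub hLop
  have green := integral_mul_lap_sub_mul_lap_eq_zero hw.smooth hw.gradSqInt hψ hψ_bdd hmul
    green_integrable
  simp only [green_integrand] at green
  rw [integral_sub (hcube.const_mul (-2)) hLop, integral_const_mul] at green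
  linarith

theorem cubic_orthogonality_identity_general {w h ψ : R2 → ℝ} {p : ℝ} {y₀ : R2}
    (hw : IsGroundState w) (hp : p ≠ 0) (hH : Hfun h w y₀ ≠ 0)
    (hψ : ContDiff ℝ 2 ψ) (hψ_bdd : BddFun ψ)
    (hψ_eq : ∀ x, Lop w ψ x =
      -(2 * w x ^ 3 / ∫ z, w z ^ 4) - 2 * h (x + y₀) * w x / (p * Hfun h w y₀))
    (hcube : Integrable fun x => w x ^ 3 * ψ x) (hmul : Integrable fun x => w x * ψ x) :
    ∫ x, w x ^ 3 * ψ x = (p + 1) / p := by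
  set A : ℝ := ∫ x, w x ^ 4
  have w_cont := hw.smooth.continuous
  have A_pos : 0 < A :=
    integral_pos_of_integrable_nonneg_nonzero (x := 0) (by fun_prop) hw.quarticInt
      (fun x => by positivity) (pow_ne_zero 4 (hw.pos 0).ne')
  have H_integrable : Integrable fun x => h (x + y₀) * w x ^ 2 :=
    not_imp_comm.mp integral_undef hH
  have pairing (x : R2) : w x * Lop w ψ x =
      -2 / A * w x ^ 4 - 2 / (p * Hfun h w y₀) * (h (x + y₀) * w x ^ 2) := by
    rw [hψ_eq]
    ring
  have quartic_part := hw.quarticInt.const_mul (-2 / A)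
  have H_part := H_integrable.const_mul (2 / (p * Hfun h w y₀))
  calc ∫ x, w x ^ 3 * ψ x = -(1 / 2) * ∫ x, w x * Lop w ψ x :=
        integral_cube_mul_eq_neg_half_integral_mul_Lop hw hψ hψ_bdd hcube hmul
          (by simp only [pairing]; exact quartic_part.sub H_part)
    _ = -(1 / 2) * (-2 / A * A - 2 / (p * Hfun h w y₀) * Hfun h w y₀) := by
        simp only [pairing]
        rw [integral_sub quartic_part H_part, integral_const_mul, integral_const_mul, Hfun]
    _ = (p + 1) / p := by field

/-- identity (A.16): `∫ w³ψ₁ = (p+1)/p`. -/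
theorem cubic_orthogonality_identity
    (w h : R2 → ℝ) (p : ℝ) (y0 : R2)
    (hw : IsGroundState w) (hp : 2 ≤ p)
    (hsmooth : ContDiff ℝ 2 h)
    (hnonneg : ∀ x, 0 ≤ h x) (hhom : Homog h p)
    (hcrit : gradient (Hfun h w) y0 = 0)
    (huniq : ∀ y, gradient (Hfun h w) y = 0 → y = y0)
    -- `ψ₁`: the unique bounded solution of `∇ψ₁(0)=0`,
    -- `Lψ₁ = -2w³/∫w⁴ - 2h(·+y₀)w/(p∫h(·+y₀)w²)`
    (ψ1 : R2 → ℝ)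
    (hψ1s : ContDiff ℝ 2 ψ1) (hψ1b : BddFun ψ1) (hψ1g : gradient ψ1 0 = 0)
    (hψ1e : ∀ x, Lop w ψ1 x =
      -(2 * (w x) ^ 3 / (∫ z, (w z) ^ 4)) - 2 * h (x + y0) * w x / (p * Hfun h w y0))
    (hint1 : Integrable fun x => (w x) ^ 3 * ψ1 x)
    (hint2 : Integrable fun x => w x * ψ1 x)
    (hint3 : Integrable fun x => ⟪gradient ψ1 x, gradient w x⟫) :
    (∫ x, (w x) ^ 3 * ψ1 x) = (p + 1) / p := by
  obtain ⟨y, hy⟩ := exists_ne_zero_of_forall_gradient_eq_zero huniq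
  have H_pos : 0 < Hfun h w y0 := Hfun_pos hw (by linarith) hsmooth.continuous hnonneg hhom hy y0
  exact cubic_orthogonality_identity_general hw (by linarith) H_pos.ne' hψ1s hψ1b hψ1e hint1 hint2
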